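/- Let c be a real number with 0 < c < 2, and let q : ℕ → ℕ be any sequence with q(n)/n → c as n → ∞. Then the variance Var(n,q(n)) of the number of bridges over bubbles of size q(n) in linear chord diagrams with n chords satisfies Var(n, q(n)) · 4n³ / (q(n)²·(2n − q(n))²) → 1 as n → ∞; that is, the variance is asymptotic to q²(2n−q)²/(4n³). -/

import Mathlib

namespace ChordBubbles

/-- A linear chord diagram with `n` chords: a fixed-point-free involution of `Fin (2*n)`. -/
def IsDiagram (n : ℕ) (f : Equiv.Perm (Fin (2 * n))) : Prop :=
  (∀ i, f (f i) = i) ∧ ∀ i, f i ≠ i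

/-- Vertex `i` is an endpoint of a short chord (a chord joining adjacent vertices). -/
def ShortEnd (n : ℕ) (f : Equiv.Perm (Fin (2 * n))) (i : Fin (2 * n)) : Prop :=
  (f i).val = i.val + 1 ∨ (f i).val + 1 = i.val

/-- `[a, b]` delimits a bubble: a maximal nonempty interval of vertices none of which is an
endpoint of a short chord. -/
def IsBubble (n : ℕ) (f : Equiv.Perm (Fin (2 * n))) (a b : ℕ) : Prop :=
  a ≤ b ∧ b < 2 * n ∧
  (∀ i : Fin (2 * n), a ≤ i.val → i.val ≤ b → ¬ ShortEnd n f i) ∧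
  (a = 0 ∨ ∃ j : Fin (2 * n), j.val + 1 = a ∧ ShortEnd n f j) ∧
  (b + 1 = 2 * n ∨ ∃ j : Fin (2 * n), j.val = b + 1 ∧ ShortEnd n f j)

/-- The size (number of vertices) of the bubble `[a, b]`. -/
def bubbleSize (a b : ℕ) : ℕ := b + 1 - a

/-- The number of bridges of the bubble `[a, b]` under the diagram `f`: the number of chords
joining a vertex inside the bubble to one outside it. -/
noncomputable def bridges (n : ℕ) (f : Equiv.Perm (Fin (2 * n))) (a b : ℕ) : ℕ :=
  Nat.card {i : Fin (2 * n) // (a ≤ i.val ∧ i.val ≤ b) ∧ ¬ (a ≤ (f i).val ∧ (f i).val ≤ b)}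

/-- `N n q b` : the number of pairs (diagram, bubble) where the diagram has `n` chords and the
bubble has size `q` and exactly `b` bridges. -/
noncomputable def N (n q b : ℕ) : ℕ :=
  Nat.card {p : Equiv.Perm (Fin (2 * n)) × ℕ × ℕ //
    IsDiagram n p.1 ∧ IsBubble n p.1 p.2.1 p.2.2 ∧
    bubbleSize p.2.1 p.2.2 = q ∧ bridges n p.1 p.2.1 p.2.2 = b}

/-- The mean number of bridges over all bubbles of size `q` in diagrams with `n` chords. -/
noncomputable def meanBridges (n q : ℕ) : ℝ :=
  (∑ b ∈ Finset.range (2 * n + 1), (b : ℝ) * N n q b) /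
  (∑ b ∈ Finset.range (2 * n + 1), (N n q b : ℝ))

/-- The variance of the number of bridges over all bubbles of size `q` in diagrams with
`n` chords. -/
noncomputable def varBridges (n q : ℕ) : ℝ :=
  (∑ b ∈ Finset.range (2 * n + 1), ((b : ℝ) - meanBridges n q) ^ 2 * N n q b) /
  (∑ b ∈ Finset.range (2 * n + 1), (N n q b : ℝ))

/-!
Let `X` be the number of bridges of a uniformly random bubble of size `q`. Exchanging the positions
of a vertex `x` in the bubble and a vertex `y` outside it preserves the bubble, apart from `O(n)`
exceptional pairs `(x, y)`. An exchange splits a chord inside the bubble and a chord outside it into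
two bridges, or joins two bridges into such a pair of chords, or leaves `X` unchanged. Since each
exchange is its own inverse, splits from `X` bridges are in bijection with joins from `X + 2`
bridges, and double counting gives, for every function `g`,
`𝔼 D * g (X + 2) = 𝔼 U * g X`, where `D = (q - X) * (2 * n - q - X) + O(n)` counts the splits and
`U = X ^ 2 + O(n)` the joins.

The quadratic terms of `D - U` cancel: `D - U = -2 * n * (X - μ) + O(n)` with
`μ = q * (2 * n - q) / (2 * n)`. Taking `g = 1` yields `𝔼 X = μ + O(1)`, and taking `g x = x - μ`
yields `2 * n * 𝔼 (X - μ) ^ 2 ≈ 2 * 𝔼 D ≈ 2 * (q - μ) * (2 * n - q - μ)`, where the right-hand side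
is `2 * n` times the claimed variance.
-/

section SecondMoment

open Finset
open scoped BigOperators

variable {ι : Type*} {P : Finset ι} {D U Y : ι → ℝ} {a b d h δ ε : ℝ}

lemma expect_sq_sub_expect (hP : P.Nonempty) (X : ι → ℝ) (μ : ℝ) :
    𝔼 i ∈ P, (X i - 𝔼 j ∈ P, X j) ^ 2 =
      𝔼 i ∈ P, (X i - μ) ^ 2 - (𝔼 i ∈ P, (X i - μ)) ^ 2 := by
  set m := 𝔼 i ∈ P, (X i - μ) with hm
  have hX : 𝔼 j ∈ P, X j = m + μ := by
    rw [hm, expect_sub_distrib, expect_const hP, sub_add_cancel]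
  calc 𝔼 i ∈ P, (X i - 𝔼 j ∈ P, X j) ^ 2
      = 𝔼 i ∈ P, ((X i - μ) ^ 2 - 2 * m * (X i - μ) + m ^ 2) :=
        expect_congr rfl fun i _ => by rw [hX]; ring
    _ = 𝔼 i ∈ P, (X i - μ) ^ 2 - m ^ 2 := by
        rw [expect_add_distrib, expect_sub_distrib, ← mul_expect, expect_const hP, ← hm]
        ring

lemma expect_abs_le_sqrt (P : Finset ι) (Y : ι → ℝ) :
    𝔼 i ∈ P, |Y i| ≤ √(𝔼 i ∈ P, Y i ^ 2) := by
  refine Real.le_sqrt_of_sq_le ?_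
  simpa only [sq_abs, expect_eq_sum_div_card] using
    sum_div_card_sq_le_sum_sq_div_card (s := P) (f := fun i => |Y i|)

lemma abs_mul_expect_le_of_drift (hP : P.Nonempty)
    (hdrift : ∀ i ∈ P, |D i - U i + a * Y i| ≤ ε) (hDU : 𝔼 i ∈ P, D i = 𝔼 i ∈ P, U i) :
    |a * 𝔼 i ∈ P, Y i| ≤ ε :=
  calc |a * 𝔼 i ∈ P, Y i| = |𝔼 i ∈ P, (D i - U i + a * Y i)| := by
        rw [expect_add_distrib, expect_sub_distrib, hDU, sub_self, zero_add, mul_expect]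
    _ ≤ 𝔼 i ∈ P, |D i - U i + a * Y i| := abs_expect_le _ _
    _ ≤ ε := expect_le hP hdrift

lemma abs_mul_expect_sq_sub_le_of_drift (hdrift : ∀ i ∈ P, |D i - U i + a * Y i| ≤ ε)
    (hDU : 𝔼 i ∈ P, D i * (Y i + h) = 𝔼 i ∈ P, U i * Y i) :
    |a * 𝔼 i ∈ P, Y i ^ 2 - h * 𝔼 i ∈ P, D i| ≤ ε * 𝔼 i ∈ P, |Y i| :=
  calc |a * 𝔼 i ∈ P, Y i ^ 2 - h * 𝔼 i ∈ P, D i|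
      = |𝔼 i ∈ P, (D i - U i + a * Y i) * Y i| := by
        have hsplit : 𝔼 i ∈ P, (D i - U i + a * Y i) * Y i =
            𝔼 i ∈ P, (D i * (Y i + h) - U i * Y i + (a * Y i ^ 2 - h * D i)) :=
          expect_congr rfl fun i _ => by ring
        rw [hsplit, expect_add_distrib, expect_sub_distrib, hDU, sub_self, zero_add,
          expect_sub_distrib, ← mul_expect, ← mul_expect]
    _ ≤ 𝔼 i ∈ P, |(D i - U i + a * Y i) * Y i| := abs_expect_le _ _
    _ ≤ 𝔼 i ∈ P, ε * |Y i| := expect_le_expect fun i hi => by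
        rw [abs_mul]
        exact mul_le_mul_of_nonneg_right (hdrift i hi) (abs_nonneg _)
    _ = ε * 𝔼 i ∈ P, |Y i| := (mul_expect _ _ _).symm

lemma abs_expect_sub_le (hP : P.Nonempty) (hD : ∀ i ∈ P, |D i - d| ≤ δ + b * |Y i|) :
    |𝔼 i ∈ P, D i - d| ≤ δ + b * 𝔼 i ∈ P, |Y i| :=
  calc |𝔼 i ∈ P, D i - d| = |𝔼 i ∈ P, (D i - d)| := by
        rw [expect_sub_distrib, expect_const hP]
    _ ≤ 𝔼 i ∈ P, |D i - d| := abs_expect_le _ _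
    _ ≤ 𝔼 i ∈ P, (δ + b * |Y i|) := expect_le_expect hD
    _ = δ + b * 𝔼 i ∈ P, |Y i| := by rw [expect_add_distrib, expect_const hP, mul_expect]

end SecondMoment

section SquareRoot

open Filter Topology

lemma abs_sub_le_mul_sqrt {K s v : ℝ} (hv : 0 ≤ v) (hs : 1 ≤ s)
    (h : |v - s| ≤ K * (√v + 1)) : |v - s| ≤ K * (K + 2) * √s := by
  have hr : 1 ≤ √s := Real.one_le_sqrt.2 hs
  have hfactor : |v - s| = |√v - √s| * (√v + √s) := by
    rw [← abs_of_nonneg (by positivity : 0 ≤ √v + √s), ← abs_mul]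
    congr 1
    linear_combination -Real.sq_sqrt hv + Real.sq_sqrt (zero_le_one.trans hs)
  have hK : 0 ≤ K := by
    by_contra! hK
    nlinarith [abs_nonneg (v - s), Real.sqrt_nonneg v]
  have hroots : |√v - √s| ≤ K := by
    refine le_of_mul_le_mul_right ?_ (by positivity : 0 < √v + √s)
    rw [← hfactor]
    exact h.trans (by gcongr)
  have hsum : √v + √s ≤ (K + 2) * √s := by nlinarith [(abs_le.1 hroots).2]
  rw [hfactor, mul_assoc]
  gcongr

lemma tendsto_div_one_of_abs_sub_le_mul_sqrt {ι : Type*} {l : Filter ι} {u v : ι → ℝ} {C : ℝ}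
    (hv : Tendsto v l atTop) (h : ∀ᶠ i in l, |u i - v i| ≤ C * √(v i)) :
    Tendsto (fun i => u i / v i) l (𝓝 1) := by
  rw [tendsto_iff_norm_sub_tendsto_zero]
  refine squeeze_zero' (Eventually.of_forall fun i => norm_nonneg _) ?_
    ((Real.tendsto_sqrt_atTop.comp hv).const_div_atTop C)
  filter_upwards [h, hv.eventually_gt_atTop 0] with i hi hpos
  calc ‖u i / v i - 1‖ = |u i - v i| / v i := by
        rw [div_sub_one hpos.ne', Real.norm_eq_abs, abs_div, abs_of_pos hpos]
    _ ≤ C * √(v i) / v i := by gcongr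
    _ = C / √(v i) := by rw [mul_div_assoc, Real.sqrt_div_self', mul_one_div]

end SquareRoot

section Rewire

open Finset Function

variable {α : Type*} [DecidableEq α]

/-- The vertices of `I` whose partner under `f` is again in `I`. -/
def innerEnds (f : α → α) (I : Finset α) : Finset α := {i ∈ I | f i ∈ I}

/-- The vertices of `I` whose partner under `f` is outside `I`: one for each bridge of `I`. -/
def bridgeEnds (f : α → α) (I : Finset α) : Finset α := {i ∈ I | f i ∉ I}

lemma card_innerEnds_add_card_bridgeEnds (f : α → α) (I : Finset α) :
    #(innerEnds f I) + #(bridgeEnds f I) = #I :=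
  card_filter_add_card_filter_not _

lemma card_bridgeEnds_compl [Fintype α] {f : α → α} (hf : Involutive f) (I : Finset α) :
    #(bridgeEnds f Iᶜ) = #(bridgeEnds f I) := by
  refine card_nbij' f f ?_ ?_ (fun i _ => hf i) (fun i _ => hf i) <;> intro i hi <;>
    simp_all [bridgeEnds, hf i]

/-- The matching obtained from `f` by exchanging the positions of the vertices `x` and `y`: the
chords `{x, f x}` and `{y, f y}` become `{x, f y}` and `{y, f x}`. -/
def rewire (f : Equiv.Perm α) (x y : α) : Equiv.Perm α := Equiv.swap x y * f * Equiv.swap x y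

variable {f : Equiv.Perm α} {x y i : α}

lemma rewire_apply : rewire f x y i = Equiv.swap x y (f (Equiv.swap x y i)) := rfl

@[simp]
lemma rewire_rewire (f : Equiv.Perm α) (x y : α) : rewire (rewire f x y) x y = f := by
  ext i; simp [rewire_apply]

lemma involutive_rewire (hf : Involutive f) (x y : α) : Involutive (rewire f x y) := by
  intro i; simp [rewire_apply, hf _]

lemma rewire_apply_ne (hf : ∀ i, f i ≠ i) (x y i : α) : rewire f x y i ≠ i := by
  rw [rewire_apply, Ne, Equiv.swap_apply_eq_iff]
  exact hf _

lemma rewire_apply_left (hy : f y ≠ y) (hxy : f y ≠ x) : rewire f x y x = f y := by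
  rw [rewire_apply, Equiv.swap_apply_left, Equiv.swap_apply_of_ne_of_ne hxy hy]

lemma rewire_apply_right (hx : f x ≠ x) (hxy : f x ≠ y) : rewire f x y y = f x := by
  rw [rewire_apply, Equiv.swap_apply_right, Equiv.swap_apply_of_ne_of_ne hx hxy]

lemma rewire_apply_of_ne (hx : i ≠ x) (hy : i ≠ y) (hfx : f i ≠ x) (hfy : f i ≠ y) :
    rewire f x y i = f i := by
  rw [rewire_apply, Equiv.swap_apply_of_ne_of_ne hx hy, Equiv.swap_apply_of_ne_of_ne hfx hfy]

lemma rewire_apply_apply_left (hf : Involutive f) (hx : f x ≠ x) (hxy : f x ≠ y) :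
    rewire f x y (f x) = y := by
  rw [← rewire_apply_right hx hxy, involutive_rewire hf]

lemma rewire_apply_apply_right (hf : Involutive f) (hy : f y ≠ y) (hxy : f y ≠ x) :
    rewire f x y (f y) = x := by
  rw [← rewire_apply_left hy hxy, involutive_rewire hf]

lemma card_bridgeEnds_rewire [Fintype α] {I : Finset α} (hf : Involutive f) (hne : ∀ i, f i ≠ i)
    (hx : x ∈ innerEnds f I) (hy : y ∈ innerEnds f Iᶜ) :
    #(bridgeEnds (rewire f x y) I) = #(bridgeEnds f I) + 2 := by
  obtain ⟨hxI, hfxI⟩ := mem_filter.1 hx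
  obtain ⟨hyI, hfyI⟩ := mem_filter.1 hy
  rw [mem_compl] at hyI hfyI
  have hfxy : f x ≠ y := fun h => hyI (h ▸ hfxI)
  have hfyx : f y ≠ x := fun h => hfyI (h ▸ hxI)
  have hxfx : x ∉ insert (f x) (bridgeEnds f I) := by
    simp [bridgeEnds, hfxI, (hne x).symm]
  have hfx : f x ∉ bridgeEnds f I := by simp [bridgeEnds, hf x, hxI]
  suffices bridgeEnds (rewire f x y) I = insert x (insert (f x) (bridgeEnds f I)) by
    rw [this, card_insert_of_notMem hxfx, card_insert_of_notMem hfx]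
  ext i
  simp only [bridgeEnds, mem_filter, mem_insert]
  by_cases hix : i = x
  · simp [hix, rewire_apply_left (hne y) hfyx, hxI, hfyI]
  by_cases hifx : i = f x
  · simp [hifx, rewire_apply_apply_left hf (hne x) hfxy, hfxI, hyI]
  by_cases hi : i ∈ I
  · have hiy : i ≠ y := fun h => hyI (h ▸ hi)
    have hfix : f i ≠ x := fun h => hifx (by rw [← h, hf])
    have hfiy : f i ≠ y := fun h => hfyI (by rwa [← h, hf])
    simp [hix, hifx, rewire_apply_of_ne hix hiy hfix hfiy]
  · simp [hix, hifx, hi]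

end Rewire

section Bubble

open Finset Function

variable {n a b : ℕ} {f : Equiv.Perm (Fin (2 * n))} {x y i j : Fin (2 * n)}

lemma IsDiagram.involutive (hf : IsDiagram n f) : Involutive f := hf.1

lemma isDiagram_rewire (hf : IsDiagram n f) (x y : Fin (2 * n)) :
    IsDiagram n (rewire f x y) :=
  ⟨involutive_rewire hf.involutive x y, rewire_apply_ne hf.2 x y⟩

/-- The vertices of the interval `[a, b]`. -/
def bubbleVertices (n a b : ℕ) : Finset (Fin (2 * n)) := {i | a ≤ i.val ∧ i.val ≤ b}

lemma mem_bubbleVertices : i ∈ bubbleVertices n a b ↔ a ≤ i.val ∧ i.val ≤ b := by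
  simp [bubbleVertices]

lemma card_bubbleVertices (hb : b < 2 * n) : #(bubbleVertices n a b) = bubbleSize a b := by
  rw [bubbleSize, ← Nat.card_Icc]
  refine card_bij (fun i _ => i.val) ?_ (fun i _ j _ => Fin.ext) ?_
  · simp [mem_bubbleVertices]
  · intro k hk
    rw [mem_Icc] at hk
    exact ⟨⟨k, by omega⟩, mem_bubbleVertices.2 hk, rfl⟩

lemma bridges_eq_card (n : ℕ) (f : Equiv.Perm (Fin (2 * n))) (a b : ℕ) :
    bridges n f a b = #(bridgeEnds f (bubbleVertices n a b)) :=
  Nat.subtype_card _ fun i => by simp [bridgeEnds, mem_bubbleVertices]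

lemma bridges_le (n : ℕ) (f : Equiv.Perm (Fin (2 * n))) (a b : ℕ) : bridges n f a b ≤ 2 * n := by
  rw [bridges_eq_card]
  exact card_finset_fin_le _

/-- The at most four vertices within distance two of the interval `[a, b]`. If `[a, b]` is a bubble,
they are the ends of the short chords that delimit it. -/
def guards (n a b : ℕ) : Finset (Fin (2 * n)) :=
  {i | i.val + 1 = a ∨ i.val + 2 = a ∨ i.val = b + 1 ∨ i.val = b + 2}

lemma mem_guards :
    i ∈ guards n a b ↔ i.val + 1 = a ∨ i.val + 2 = a ∨ i.val = b + 1 ∨ i.val = b + 2 := by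
  simp [guards]

lemma card_guards_le (n a b : ℕ) : #(guards n a b) ≤ 4 := by
  refine (card_le_card_of_injOn (t := {a - 1, a - 2, b + 1, b + 2}) Fin.val ?_
    Fin.val_injective.injOn).trans card_le_four
  intro i hi
  have := mem_guards.1 (mem_coe.1 hi)
  simp only [coe_insert, coe_singleton, Set.mem_insert_iff, Set.mem_singleton_iff]
  omega

/-- The vertices `i` and `j` are equal or adjacent. -/
def Near (i j : Fin (2 * n)) : Prop := i.val ≤ j.val + 1 ∧ j.val ≤ i.val + 1

lemma Near.symm (h : Near i j) : Near j i := And.symm h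

lemma IsDiagram.shortEnd_iff_near (hf : IsDiagram n f) : ShortEnd n f i ↔ Near i (f i) := by
  have hne : (f i).val ≠ i.val := fun h => hf.2 i (Fin.ext h)
  unfold ShortEnd Near
  omega

lemma not_near_of_notMem_guards (hi : i ∈ bubbleVertices n a b) (hj : j ∉ bubbleVertices n a b)
    (hj' : j ∉ guards n a b) : ¬ Near i j := by
  rw [mem_bubbleVertices] at hi hj
  rw [mem_guards] at hj'
  unfold Near
  omega

lemma notMem_bubbleVertices_of_mem_guards (hi : i ∈ guards n a b) :
    i ∉ bubbleVertices n a b := by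
  rw [mem_guards] at hi
  rw [mem_bubbleVertices]
  omega

open scoped Classical in
lemma card_filter_near_le (z : Fin (2 * n)) : #{i | Near i z} ≤ 3 := by
  refine (card_le_card_of_injOn (t := Icc (z.val - 1) (z.val + 1)) Fin.val ?_
    Fin.val_injective.injOn).trans (by rw [Nat.card_Icc]; omega)
  intro i hi
  have : Near i z := by simpa using hi
  unfold Near at this
  rw [mem_coe, mem_Icc]
  omega

lemma IsBubble.not_near (hB : IsBubble n f a b) (hf : IsDiagram n f)
    (hi : i ∈ bubbleVertices n a b) : ¬ Near i (f i) := by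
  rw [← hf.shortEnd_iff_near]
  exact hB.2.2.1 i (mem_bubbleVertices.1 hi).1 (mem_bubbleVertices.1 hi).2

lemma IsBubble.apply_val_of_val_succ_eq (hB : IsBubble n f a b) (hf : IsDiagram n f)
    (hi : i.val + 1 = a) : (f i).val + 2 = a := by
  obtain ⟨hab, -, hshort, hleft, -⟩ := hB
  obtain ⟨j, hj, hjs⟩ := hleft.resolve_left (by omega)
  obtain rfl : j = i := Fin.ext (by omega)
  refine hjs.elim (fun h => ?_) (fun h => by omega)
  refine absurd ?_ (hshort (f j) (by omega) (by omega))
  exact Or.inr (by rw [hf.1, h])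

lemma IsBubble.apply_val_of_val_eq_succ (hB : IsBubble n f a b) (hf : IsDiagram n f)
    (hi : i.val = b + 1) : (f i).val = b + 2 := by
  obtain ⟨hab, -, hshort, -, hright⟩ := hB
  obtain ⟨j, hj, hjs⟩ := hright.resolve_left (by omega)
  obtain rfl : j = i := Fin.ext (by omega)
  refine hjs.elim (fun h => by omega) (fun h => ?_)
  refine absurd ?_ (hshort (f j) (by omega) (by omega))
  exact Or.inl (by rw [hf.1, h])

lemma IsBubble.apply_mem_guards (hB : IsBubble n f a b) (hf : IsDiagram n f)
    (hi : i ∈ guards n a b) : f i ∈ guards n a b := by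
  rw [mem_guards] at hi ⊢
  rcases hi with hi | hi | hi | hi
  · have := hB.apply_val_of_val_succ_eq hf hi
    omega
  · obtain ⟨j, hj, -⟩ := hB.2.2.2.1.resolve_left (by omega)
    have := hB.apply_val_of_val_succ_eq hf hj
    obtain rfl : f j = i := Fin.ext (by omega)
    rw [hf.1]
    omega
  · have := hB.apply_val_of_val_eq_succ hf hi
    omega
  · obtain ⟨j, hj, -⟩ := hB.2.2.2.2.resolve_left (by omega)
    have := hB.apply_val_of_val_eq_succ hf hj
    obtain rfl : f j = i := Fin.ext (by omega)
    rw [hf.1]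
    omega

lemma IsBubble.apply_mem_guards_iff (hB : IsBubble n f a b) (hf : IsDiagram n f) :
    f i ∈ guards n a b ↔ i ∈ guards n a b :=
  ⟨fun h => hf.1 i ▸ hB.apply_mem_guards hf h, hB.apply_mem_guards hf⟩

/-- `(x, y)` is admissible for the bubble `[a, b]` of `f` if `x` is in the bubble, `y` is outside it
and is not a guard, and `x` is not equal or adjacent to its new partner `f y`. Then exchanging `x`
and `y` preserves the bubble. -/
structure IsMove (n : ℕ) (f : Equiv.Perm (Fin (2 * n))) (a b : ℕ) (x y : Fin (2 * n)) : Prop where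
  left_mem : x ∈ bubbleVertices n a b
  right_notMem : y ∉ bubbleVertices n a b
  right_notMem_guards : y ∉ guards n a b
  not_near : ¬ Near x (f y)

lemma IsMove.apply_right_ne (h : IsMove n f a b x y) : f y ≠ x := by
  rintro rfl
  exact h.not_near ⟨Nat.le_succ _, Nat.le_succ _⟩

lemma IsMove.apply_left_ne (h : IsMove n f a b x y) (hf : IsDiagram n f) : f x ≠ y := by
  rintro rfl
  exact h.apply_right_ne (hf.1 x)

lemma IsMove.rewire_left (h : IsMove n f a b x y) (hf : IsDiagram n f) :
    rewire f x y x = f y :=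
  rewire_apply_left (hf.2 y) h.apply_right_ne

lemma IsMove.rewire_right (h : IsMove n f a b x y) (hf : IsDiagram n f) :
    rewire f x y y = f x :=
  rewire_apply_right (hf.2 x) (h.apply_left_ne hf)

lemma isMove_rewire (h : IsMove n f a b x y) (hf : IsDiagram n f) (hB : IsBubble n f a b) :
    IsMove n (rewire f x y) a b x y where
  left_mem := h.left_mem
  right_notMem := h.right_notMem
  right_notMem_guards := h.right_notMem_guards
  not_near := by
    rw [h.rewire_right hf]
    exact hB.not_near hf h.left_mem

lemma IsMove.rewire_apply_of_mem_guards (h : IsMove n f a b x y) (hf : IsDiagram n f)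
    (hB : IsBubble n f a b) (hi : i ∈ guards n a b) : rewire f x y i = f i := by
  have ne_x {j} (hj : j ∈ guards n a b) : j ≠ x := fun hjx =>
    notMem_bubbleVertices_of_mem_guards hj (hjx ▸ h.left_mem)
  have ne_y {j} (hj : j ∈ guards n a b) : j ≠ y := fun hjy => h.right_notMem_guards (hjy ▸ hj)
  have hfi := hB.apply_mem_guards hf hi
  exact rewire_apply_of_ne (ne_x hi) (ne_y hi) (ne_x hfi) (ne_y hfi)

lemma IsMove.not_near_rewire (h : IsMove n f a b x y) (hf : IsDiagram n f)
    (hB : IsBubble n f a b) (hi : i ∈ bubbleVertices n a b) :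
    ¬ Near i (rewire f x y i) := by
  by_cases hix : i = x
  · rw [hix, h.rewire_left hf]
    exact h.not_near
  by_cases hfix : f i = x
  · obtain rfl : f x = i := by rw [← hfix, hf.1]
    rw [rewire_apply_apply_left hf.involutive (hf.2 x) (h.apply_left_ne hf)]
    exact not_near_of_notMem_guards hi h.right_notMem h.right_notMem_guards
  by_cases hfiy : f i = y
  · obtain rfl : f y = i := by rw [← hfiy, hf.1]
    rw [rewire_apply_apply_right hf.involutive (hf.2 y) h.apply_right_ne]
    exact fun hnear => h.not_near hnear.symm
  · have hiy : i ≠ y := fun hiy => h.right_notMem (hiy ▸ hi)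
    rw [rewire_apply_of_ne hix hiy hfix hfiy]
    exact hB.not_near hf hi

lemma isBubble_rewire (hB : IsBubble n f a b) (hf : IsDiagram n f) (h : IsMove n f a b x y) :
    IsBubble n (rewire f x y) a b := by
  have short_of_guard {j} (hj : j ∈ guards n a b) (hs : ShortEnd n f j) :
      ShortEnd n (rewire f x y) j := by
    rwa [ShortEnd, h.rewire_apply_of_mem_guards hf hB hj]
  refine ⟨hB.1, hB.2.1, fun i hai hib => ?_, hB.2.2.2.1.imp_right ?_, hB.2.2.2.2.imp_right ?_⟩
  · rw [(isDiagram_rewire hf x y).shortEnd_iff_near]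
    exact h.not_near_rewire hf hB (mem_bubbleVertices.2 ⟨hai, hib⟩)
  · rintro ⟨j, hj, hs⟩
    exact ⟨j, hj, short_of_guard (mem_guards.2 (by omega)) hs⟩
  · rintro ⟨j, hj, hs⟩
    exact ⟨j, hj, short_of_guard (mem_guards.2 (by omega)) hs⟩

open scoped Classical in
/-- The admissible exchanges that turn a chord inside the bubble and a chord outside it into two
bridges. -/
noncomputable def splits (n : ℕ) (f : Equiv.Perm (Fin (2 * n))) (a b : ℕ) :
    Finset (Fin (2 * n) × Fin (2 * n)) :=
  {m | IsMove n f a b m.1 m.2 ∧ f m.1 ∈ bubbleVertices n a b ∧ f m.2 ∉ bubbleVertices n a b}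

open scoped Classical in
/-- The admissible exchanges that turn two bridges into a chord inside the bubble and a chord
outside it. -/
noncomputable def joins (n : ℕ) (f : Equiv.Perm (Fin (2 * n))) (a b : ℕ) :
    Finset (Fin (2 * n) × Fin (2 * n)) :=
  {m | IsMove n f a b m.1 m.2 ∧ f m.1 ∉ bubbleVertices n a b ∧ f m.2 ∈ bubbleVertices n a b}

variable {m : Fin (2 * n) × Fin (2 * n)}

lemma mem_splits : m ∈ splits n f a b ↔ IsMove n f a b m.1 m.2 ∧
    f m.1 ∈ bubbleVertices n a b ∧ f m.2 ∉ bubbleVertices n a b := by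
  simp [splits]

lemma mem_joins : m ∈ joins n f a b ↔ IsMove n f a b m.1 m.2 ∧
    f m.1 ∉ bubbleVertices n a b ∧ f m.2 ∈ bubbleVertices n a b := by
  simp [joins]

lemma mem_joins_rewire (hf : IsDiagram n f) (hB : IsBubble n f a b) (hm : m ∈ splits n f a b) :
    m ∈ joins n (rewire f m.1 m.2) a b := by
  obtain ⟨h, hin, hout⟩ := mem_splits.1 hm
  rw [mem_joins, h.rewire_left hf, h.rewire_right hf]
  exact ⟨isMove_rewire h hf hB, hout, hin⟩

lemma mem_splits_rewire (hf : IsDiagram n f) (hB : IsBubble n f a b) (hm : m ∈ joins n f a b) :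
    m ∈ splits n (rewire f m.1 m.2) a b := by
  obtain ⟨h, hout, hin⟩ := mem_joins.1 hm
  rw [mem_splits, h.rewire_left hf, h.rewire_right hf]
  exact ⟨isMove_rewire h hf hB, hin, hout⟩

lemma bridges_rewire (hf : IsDiagram n f) (hm : m ∈ splits n f a b) :
    bridges n (rewire f m.1 m.2) a b = bridges n f a b + 2 := by
  obtain ⟨h, hin, hout⟩ := mem_splits.1 hm
  rw [bridges_eq_card, bridges_eq_card]
  refine card_bridgeEnds_rewire hf.involutive hf.2 (mem_filter.2 ⟨h.left_mem, hin⟩)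
    (mem_filter.2 ?_)
  simpa only [mem_compl] using ⟨h.right_notMem, hout⟩

lemma splits_eq_product (hf : IsDiagram n f) (hB : IsBubble n f a b) :
    splits n f a b = innerEnds f (bubbleVertices n a b) ×ˢ
      (innerEnds f (bubbleVertices n a b)ᶜ \ guards n a b) := by
  ext ⟨x, y⟩
  simp only [mem_splits, mem_product, mem_sdiff, innerEnds, mem_filter, mem_compl]
  constructor
  · rintro ⟨h, hin, hout⟩
    exact ⟨⟨h.left_mem, hin⟩, ⟨h.right_notMem, hout⟩, h.right_notMem_guards⟩
  · rintro ⟨⟨hx, hfx⟩, ⟨hy, hfy⟩, hyg⟩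
    have hfyg : f y ∉ guards n a b := (hB.apply_mem_guards_iff hf).not.2 hyg
    exact ⟨⟨hx, hy, hyg, not_near_of_notMem_guards hx hfy hfyg⟩, hfx, hfy⟩

open scoped Classical in
lemma joins_eq_filter (hf : IsDiagram n f) (hB : IsBubble n f a b) :
    joins n f a b = {m ∈ bridgeEnds f (bubbleVertices n a b) ×ˢ
      bridgeEnds f (bubbleVertices n a b)ᶜ | ¬ Near m.1 (f m.2)} := by
  ext ⟨x, y⟩
  simp only [mem_joins, mem_filter, mem_product, bridgeEnds, mem_compl, not_not]
  constructor
  · rintro ⟨h, hout, hin⟩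
    exact ⟨⟨⟨h.left_mem, hout⟩, h.right_notMem, hin⟩, h.not_near⟩
  · rintro ⟨⟨⟨hx, hfx⟩, hy, hfy⟩, hnear⟩
    have hyg : y ∉ guards n a b := fun hyg =>
      notMem_bubbleVertices_of_mem_guards (hB.apply_mem_guards hf hyg) hfy
    exact ⟨⟨hx, hy, hyg, hnear⟩, hfx, hfy⟩

lemma card_innerEnds_bubbleVertices (hb : b < 2 * n) :
    (#(innerEnds f (bubbleVertices n a b)) : ℝ) = bubbleSize a b - bridges n f a b := by
  rw [eq_sub_iff_add_eq, bridges_eq_card, ← card_bubbleVertices hb]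
  exact_mod_cast card_innerEnds_add_card_bridgeEnds f _

lemma card_innerEnds_compl_bubbleVertices (hf : IsDiagram n f) (hb : b < 2 * n) :
    (#(innerEnds f (bubbleVertices n a b)ᶜ) : ℝ) =
      2 * n - bubbleSize a b - bridges n f a b := by
  have hcompl := card_innerEnds_add_card_bridgeEnds f (bubbleVertices n a b)ᶜ
  have htotal := card_add_card_compl (bubbleVertices n a b)
  rw [card_bridgeEnds_compl hf.involutive, ← bridges_eq_card] at hcompl
  rw [Fintype.card_fin, card_bubbleVertices hb, ← hcompl] at htotal
  have : (bubbleSize a b + (#(innerEnds f (bubbleVertices n a b)ᶜ) + bridges n f a b) : ℝ) =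
      2 * n := mod_cast htotal
  linarith

lemma abs_card_splits_sub_le (hf : IsDiagram n f) (hB : IsBubble n f a b) :
    |(#(splits n f a b) : ℝ) - (bubbleSize a b - bridges n f a b) *
      (2 * n - bubbleSize a b - bridges n f a b)| ≤ 8 * n := by
  rw [← card_innerEnds_bubbleVertices hB.2.1, ← card_innerEnds_compl_bubbleVertices hf hB.2.1,
    splits_eq_product hf hB, card_product]
  set A := innerEnds f (bubbleVertices n a b)
  set B := innerEnds f (bubbleVertices n a b)ᶜ
  have hA : (#A : ℝ) ≤ 2 * n := mod_cast card_finset_fin_le A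
  have hBle : (#(B \ guards n a b) : ℝ) ≤ #B := mod_cast card_le_card sdiff_subset
  have hBge : (#B : ℝ) ≤ #(B \ guards n a b) + 4 := mod_cast
    (card_le_card_sdiff_add_card (s := B) (t := guards n a b)).trans
      (Nat.add_le_add_left (card_guards_le n a b) _)
  push_cast
  rw [abs_le]
  constructor <;> nlinarith [(#A).cast_nonneg (α := ℝ)]

open scoped Classical in
lemma card_filter_near_apply_le (f : Equiv.Perm (Fin (2 * n)))
    (s : Finset (Fin (2 * n) × Fin (2 * n))) : #{m ∈ s | Near m.1 (f m.2)} ≤ 6 * n := by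
  have fiber_le (y : Fin (2 * n)) :
      #{m ∈ {m ∈ s | Near m.1 (f m.2)} | m.2 = y} ≤ 3 := by
    refine (card_le_card_of_injOn Prod.fst ?_ ?_).trans (card_filter_near_le (f y))
    · rintro ⟨x, z⟩ hm
      obtain ⟨⟨-, hnear⟩, rfl⟩ : ((x, z) ∈ s ∧ Near x (f z)) ∧ z = y := by simpa using hm
      simpa using hnear
    · rintro ⟨x, z⟩ hm ⟨x', z'⟩ hm' hx
      simp_all
  refine (card_le_mul_card_image_of_maps_to (t := univ) (fun m _ => mem_univ m.2) 3
    fun y _ => fiber_le y).trans ?_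
  rw [card_univ, Fintype.card_fin]
  omega

lemma abs_card_joins_sub_le (hf : IsDiagram n f) (hB : IsBubble n f a b) :
    |(#(joins n f a b) : ℝ) - (bridges n f a b : ℝ) ^ 2| ≤ 6 * n := by
  classical
  have htotal := card_filter_add_card_filter_not (s := bridgeEnds f (bubbleVertices n a b) ×ˢ
    bridgeEnds f (bubbleVertices n a b)ᶜ) (fun m => Near m.1 (f m.2))
  rw [← joins_eq_filter hf hB, card_product, card_bridgeEnds_compl hf.involutive,
    ← bridges_eq_card, ← sq] at htotal
  have hnear : (#{m ∈ bridgeEnds f (bubbleVertices n a b) ×ˢ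
      bridgeEnds f (bubbleVertices n a b)ᶜ | Near m.1 (f m.2)} : ℝ) ≤ 6 * n :=
    mod_cast card_filter_near_apply_le f _
  rw [← Nat.cast_pow, ← htotal, Nat.cast_add, sub_add_cancel_right, abs_neg, Nat.abs_cast]
  exact hnear

end Bubble

section BubbleSpace

open Finset
open scoped BigOperators

variable {n q : ℕ} {p : Equiv.Perm (Fin (2 * n)) × ℕ × ℕ}

open scoped Classical in
/-- The finite probability space of the problem: pairs of a diagram with `n` chords and a bubble
`[a, b]` of size `q` of it, encoded as triples `(f, a, b)`. -/
noncomputable def bubbles (n q : ℕ) : Finset (Equiv.Perm (Fin (2 * n)) × ℕ × ℕ) :=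
  {p ∈ univ ×ˢ range (2 * n) ×ˢ range (2 * n) |
    IsDiagram n p.1 ∧ IsBubble n p.1 p.2.1 p.2.2 ∧ bubbleSize p.2.1 p.2.2 = q}

/-- The number of bridges as a random variable on `bubbles n q`. -/
noncomputable def bridgeCount (p : Equiv.Perm (Fin (2 * n)) × ℕ × ℕ) : ℝ :=
  bridges n p.1 p.2.1 p.2.2

/-- The number of exchanges that increase the number of bridges by two. -/
noncomputable def splitCount (p : Equiv.Perm (Fin (2 * n)) × ℕ × ℕ) : ℝ :=
  #(splits n p.1 p.2.1 p.2.2)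

/-- The number of exchanges that decrease the number of bridges by two. -/
noncomputable def joinCount (p : Equiv.Perm (Fin (2 * n)) × ℕ × ℕ) : ℝ :=
  #(joins n p.1 p.2.1 p.2.2)

lemma mem_bubbles : p ∈ bubbles n q ↔
    IsDiagram n p.1 ∧ IsBubble n p.1 p.2.1 p.2.2 ∧ bubbleSize p.2.1 p.2.2 = q := by
  simp only [bubbles, mem_filter, mem_product, mem_univ, mem_range, true_and,
    and_iff_right_iff_imp]
  rintro ⟨-, hB, -⟩
  exact ⟨hB.1.trans_lt hB.2.1, hB.2.1⟩

open scoped Classical in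
lemma N_eq_card (n q k : ℕ) :
    N n q k = #{p ∈ bubbles n q | bridges n p.1 p.2.1 p.2.2 = k} :=
  Nat.subtype_card _ fun p => by rw [mem_filter, mem_bubbles, and_assoc, and_assoc]

lemma sum_mul_N (n q : ℕ) (F : ℝ → ℝ) :
    ∑ k ∈ range (2 * n + 1), F k * N n q k = ∑ p ∈ bubbles n q, F (bridgeCount p) := by
  classical
  rw [← sum_fiberwise_of_maps_to (t := range (2 * n + 1))
    (g := fun p : Equiv.Perm (Fin (2 * n)) × ℕ × ℕ => bridges n p.1 p.2.1 p.2.2) fun p _ =>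
      mem_range_succ_iff.2 (bridges_le n p.1 p.2.1 p.2.2)]
  refine sum_congr rfl fun k _ => ?_
  rw [N_eq_card, mul_comm, ← nsmul_eq_mul, ← sum_const]
  exact sum_congr rfl fun p hp => by rw [bridgeCount, (mem_filter.1 hp).2]

lemma sum_mul_N_div_sum_N (n q : ℕ) (F : ℝ → ℝ) :
    (∑ k ∈ range (2 * n + 1), F k * N n q k) / ∑ k ∈ range (2 * n + 1), (N n q k : ℝ) =
      𝔼 p ∈ bubbles n q, F (bridgeCount p) := by
  have hcard : ∑ k ∈ range (2 * n + 1), (N n q k : ℝ) = #(bubbles n q) := by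
    simpa using sum_mul_N n q 1
  rw [expect_eq_sum_div_card, sum_mul_N, hcard]

lemma meanBridges_eq_expect (n q : ℕ) : meanBridges n q = 𝔼 p ∈ bubbles n q, bridgeCount p :=
  sum_mul_N_div_sum_N n q id

lemma varBridges_eq_expect (n q : ℕ) : varBridges n q =
    𝔼 p ∈ bubbles n q, (bridgeCount p - 𝔼 p' ∈ bubbles n q, bridgeCount p') ^ 2 := by
  rw [← meanBridges_eq_expect]
  exact sum_mul_N_div_sum_N n q fun x => (x - meanBridges n q) ^ 2

lemma sum_splitCount_mul (n q : ℕ) (g : ℝ → ℝ) :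
    ∑ p ∈ bubbles n q, splitCount p * g (bridgeCount p + 2) =
      ∑ p ∈ bubbles n q, joinCount p * g (bridgeCount p) := by
  simp only [splitCount, joinCount, ← nsmul_eq_mul, ← sum_const]
  rw [sum_sigma', sum_sigma']
  refine sum_nbij' (fun z => ⟨(rewire z.1.1 z.2.1 z.2.2, z.1.2), z.2⟩)
    (fun z => ⟨(rewire z.1.1 z.2.1 z.2.2, z.1.2), z.2⟩) ?_ ?_ ?_ ?_ ?_
  · rintro ⟨⟨f, a, b⟩, m⟩ hz
    obtain ⟨hp, hm⟩ := mem_sigma.1 hz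
    obtain ⟨hf, hB, hq⟩ := mem_bubbles.1 hp
    exact mem_sigma.2 ⟨mem_bubbles.2 ⟨isDiagram_rewire hf _ _,
      isBubble_rewire hB hf (mem_splits.1 hm).1, hq⟩, mem_joins_rewire hf hB hm⟩
  · rintro ⟨⟨f, a, b⟩, m⟩ hz
    obtain ⟨hp, hm⟩ := mem_sigma.1 hz
    obtain ⟨hf, hB, hq⟩ := mem_bubbles.1 hp
    exact mem_sigma.2 ⟨mem_bubbles.2 ⟨isDiagram_rewire hf _ _,
      isBubble_rewire hB hf (mem_joins.1 hm).1, hq⟩, mem_splits_rewire hf hB hm⟩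
  · rintro ⟨⟨f, a, b⟩, m⟩ -
    simp
  · rintro ⟨⟨f, a, b⟩, m⟩ -
    simp
  · rintro ⟨⟨f, a, b⟩, m⟩ hz
    obtain ⟨hp, hm⟩ := mem_sigma.1 hz
    simp [bridgeCount, bridges_rewire (mem_bubbles.1 hp).1 hm]

lemma expect_splitCount_mul (n q : ℕ) (g : ℝ → ℝ) :
    𝔼 p ∈ bubbles n q, splitCount p * g (bridgeCount p + 2) =
      𝔼 p ∈ bubbles n q, joinCount p * g (bridgeCount p) := by
  simp only [expect_eq_sum_div_card, sum_splitCount_mul]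

lemma bridgeCount_nonneg (p : Equiv.Perm (Fin (2 * n)) × ℕ × ℕ) : 0 ≤ bridgeCount p :=
  Nat.cast_nonneg _

lemma bridgeCount_le (p : Equiv.Perm (Fin (2 * n)) × ℕ × ℕ) : bridgeCount p ≤ 2 * n := by
  unfold bridgeCount
  exact_mod_cast bridges_le n p.1 p.2.1 p.2.2

lemma abs_splitCount_sub_le (hp : p ∈ bubbles n q) :
    |splitCount p - (q - bridgeCount p) * (2 * n - q - bridgeCount p)| ≤ 8 * n := by
  obtain ⟨hf, hB, rfl⟩ := mem_bubbles.1 hp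
  exact abs_card_splits_sub_le hf hB

lemma abs_joinCount_sub_le (hp : p ∈ bubbles n q) :
    |joinCount p - bridgeCount p ^ 2| ≤ 6 * n := by
  obtain ⟨hf, hB, -⟩ := mem_bubbles.1 hp
  exact abs_card_joins_sub_le hf hB

end BubbleSpace

section Existence

open Finset

/-- A matching of `{0, …, 2 * n - 1}` for which the first `q` vertices form a bubble: vertex `i` is
matched with `i + q / 2` for `i < q / 2`, the vertex `q - 1` left over for odd `q` is matched with
the last vertex, and all remaining chords are short. -/
def initialBubblePartner (n q i : ℕ) : ℕ :=
  if i < q / 2 then i + q / 2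
  else if i < 2 * (q / 2) then i - q / 2
  else if i < q then 2 * n - 1
  else if i + 1 = 2 * n ∧ q % 2 = 1 then q - 1
  else if i % 2 = q % 2 then i + 1
  else i - 1

variable {n q i : ℕ}

lemma initialBubblePartner_lt (hq : 2 ≤ q) (hqn : q + 3 ≤ 2 * n) (hi : i < 2 * n) :
    initialBubblePartner n q i < 2 * n := by
  unfold initialBubblePartner
  grind

lemma initialBubblePartner_involutive (hq : 2 ≤ q) (hqn : q + 3 ≤ 2 * n) (hi : i < 2 * n) :
    initialBubblePartner n q (initialBubblePartner n q i) = i := by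
  unfold initialBubblePartner
  split_ifs <;> omega

lemma initialBubblePartner_ne (hq : 2 ≤ q) (hqn : q + 3 ≤ 2 * n) :
    initialBubblePartner n q i ≠ i := by
  unfold initialBubblePartner
  grind

lemma initialBubblePartner_not_short (hq : 4 ≤ q) (hqn : q + 3 ≤ 2 * n) (hi : i < q) :
    ¬ (initialBubblePartner n q i = i + 1 ∨ initialBubblePartner n q i + 1 = i) := by
  unfold initialBubblePartner
  grind

lemma initialBubblePartner_self (hqn : q + 3 ≤ 2 * n) : initialBubblePartner n q q = q + 1 := by
  unfold initialBubblePartner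
  grind

lemma bubbles_nonempty (hq : 4 ≤ q) (hqn : q + 3 ≤ 2 * n) : (bubbles n q).Nonempty := by
  let F (i : Fin (2 * n)) : Fin (2 * n) :=
    ⟨initialBubblePartner n q i, initialBubblePartner_lt (by omega) hqn i.2⟩
  have hF : Function.Involutive F := fun i =>
    Fin.ext (initialBubblePartner_involutive (by omega) hqn i.2)
  have hdiagram : IsDiagram n hF.toPerm :=
    ⟨hF, fun i hi => initialBubblePartner_ne (by omega) hqn (congrArg Fin.val hi)⟩
  have hbubble : IsBubble n hF.toPerm 0 (q - 1) := by
    refine ⟨by omega, by omega, fun i _ hi => ?_, Or.inl rfl, Or.inr ⟨⟨q, by omega⟩, ?_, ?_⟩⟩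
    · exact initialBubblePartner_not_short hq hqn (show i.val < q by omega)
    · exact (Nat.sub_add_cancel (show 1 ≤ q by omega)).symm
    · exact Or.inl (initialBubblePartner_self hqn)
  exact ⟨(hF.toPerm, 0, q - 1), mem_bubbles.2 ⟨hdiagram, hbubble, by simp only [bubbleSize]; omega⟩⟩

end Existence

section Variance

open Finset Filter Topology
open scoped BigOperators

/-- The number of bridges at which split and join moves balance: the zero `X = q(2n-q)/(2n)` of the
drift `(q - X)(2n - q - X) - X²`. -/
noncomputable def predictedMean (n q : ℕ) : ℝ := q * (2 * n - q) / (2 * n)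

/-- The predicted variance `q²(2n-q)²/(4n³)`. -/
noncomputable def predictedVar (n q : ℕ) : ℝ :=
  (q : ℝ) ^ 2 * (2 * (n : ℝ) - (q : ℝ)) ^ 2 / (4 * (n : ℝ) ^ 3)

variable {n q : ℕ} {p : Equiv.Perm (Fin (2 * n)) × ℕ × ℕ}

lemma two_mul_predictedMean (hn : 0 < n) :
    2 * n * predictedMean n q = (q * (2 * n - q) : ℝ) := by
  unfold predictedMean
  field_simp

lemma predictedMean_nonneg (hq : q ≤ 2 * n) : 0 ≤ predictedMean n q := by
  have : (0 : ℝ) ≤ 2 * n - q := sub_nonneg.2 (mod_cast hq)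
  unfold predictedMean
  positivity

lemma predictedMean_le (hn : 0 < n) (hq : q ≤ 2 * n) : predictedMean n q ≤ 2 * n := by
  have hqR : (q : ℝ) ≤ 2 * n := mod_cast hq
  rw [predictedMean, div_le_iff₀ (by positivity)]
  exact mul_le_mul hqR (sub_le_self _ q.cast_nonneg) (sub_nonneg.2 hqR) (by positivity)

lemma mul_predictedVar (hn : 0 < n) : n * predictedVar n q =
    (q - predictedMean n q) * (2 * n - q - predictedMean n q) := by
  unfold predictedVar predictedMean
  field_simp
  ring

lemma abs_drift_le (hn : 0 < n) (hp : p ∈ bubbles n q) :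
    |splitCount p - joinCount p + 2 * n * (bridgeCount p - predictedMean n q)| ≤ 14 * n := by
  have hdrift : splitCount p - joinCount p + 2 * n * (bridgeCount p - predictedMean n q) =
      (splitCount p - (q - bridgeCount p) * (2 * n - q - bridgeCount p)) -
        (joinCount p - bridgeCount p ^ 2) := by
    linear_combination -two_mul_predictedMean hn
  rw [hdrift]
  refine (abs_sub _ _).trans ?_
  linarith [abs_splitCount_sub_le hp, abs_joinCount_sub_le hp]

lemma abs_splitCount_sub_mul_predictedVar_le (hn : 0 < n) (hq : q ≤ 2 * n)
    (hp : p ∈ bubbles n q) :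
    |splitCount p - n * predictedVar n q| ≤
      8 * n + 2 * n * |bridgeCount p - predictedMean n q| := by
  have hsplit : splitCount p - n * predictedVar n q =
      (splitCount p - (q - bridgeCount p) * (2 * n - q - bridgeCount p)) +
        (bridgeCount p + predictedMean n q - 2 * n) * (bridgeCount p - predictedMean n q) := by
    rw [mul_predictedVar hn]
    ring
  have hslope : |bridgeCount p + predictedMean n q - 2 * n| ≤ 2 * n := by
    rw [abs_le]
    constructor <;> linarith [bridgeCount_nonneg p, bridgeCount_le p, predictedMean_nonneg hq,
      predictedMean_le hn hq]
  rw [hsplit]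
  refine (abs_add_le _ _).trans (add_le_add (abs_splitCount_sub_le hp) ?_)
  rw [abs_mul]
  gcongr

lemma abs_expect_bridgeCount_sub_le (hn : 0 < n) (hne : (bubbles n q).Nonempty) :
    |𝔼 p ∈ bubbles n q, (bridgeCount p - predictedMean n q)| ≤ 7 := by
  have hnR : (0 : ℝ) < 2 * n := by positivity
  have hbalance : 𝔼 p ∈ bubbles n q, splitCount p = 𝔼 p ∈ bubbles n q, joinCount p := by
    simpa using expect_splitCount_mul n q 1
  have hmean := abs_mul_expect_le_of_drift hne (fun p hp => abs_drift_le hn hp) hbalance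
  rw [abs_mul, abs_of_pos hnR] at hmean
  exact le_of_mul_le_mul_left (hmean.trans_eq (by ring)) hnR

lemma abs_expect_sq_sub_predictedVar_le (hn : 0 < n) (hq : q ≤ 2 * n)
    (hne : (bubbles n q).Nonempty) :
    |𝔼 p ∈ bubbles n q, (bridgeCount p - predictedMean n q) ^ 2 - predictedVar n q| ≤
      9 * (√(𝔼 p ∈ bubbles n q, (bridgeCount p - predictedMean n q) ^ 2) + 1) := by
  have hbalance : 𝔼 p ∈ bubbles n q, splitCount p * (bridgeCount p - predictedMean n q + 2) =
      𝔼 p ∈ bubbles n q, joinCount p * (bridgeCount p - predictedMean n q) := by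
    simpa only [sub_add_eq_add_sub] using expect_splitCount_mul n q (· - predictedMean n q)
  have hsecond := abs_mul_expect_sq_sub_le_of_drift (fun p hp => abs_drift_le hn hp) hbalance
  have hsplit := abs_expect_sub_le hne
    fun p hp => abs_splitCount_sub_mul_predictedVar_le hn hq hp
  have hsqrt := expect_abs_le_sqrt (bubbles n q) fun p => bridgeCount p - predictedMean n q
  set V := 𝔼 p ∈ bubbles n q, (bridgeCount p - predictedMean n q) ^ 2
  set A := 𝔼 p ∈ bubbles n q, |bridgeCount p - predictedMean n q|
  set S := 𝔼 p ∈ bubbles n q, splitCount p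
  have hnR : (0 : ℝ) < 2 * n := by positivity
  refine le_of_mul_le_mul_left ?_ hnR
  calc 2 * n * |V - predictedVar n q|
      = |(2 * n * V - 2 * S) + 2 * (S - n * predictedVar n q)| := by
        rw [← abs_of_pos hnR, ← abs_mul, abs_of_pos hnR]
        ring_nf
    _ ≤ 14 * n * A + 2 * (8 * n + 2 * n * A) := by
        refine (abs_add_le _ _).trans (add_le_add hsecond ?_)
        rw [abs_mul, abs_two]
        gcongr
    _ ≤ 2 * n * (9 * (√V + 1)) := by nlinarith

lemma four_le_of_add_pow_three_le {q r : ℕ} (hpos : 0 < q + r)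
    (h : (q + r) ^ 3 ≤ q ^ 2 * r ^ 2) : 4 ≤ q := by
  by_contra! hq
  have hbound : q ^ 2 * r ^ 2 ≤ 3 * q * r ^ 2 := by
    rw [sq q]
    gcongr
    exact Nat.le_of_lt_succ hq
  have hcubes : 0 < q ^ 3 + r ^ 3 := by
    rcases Nat.eq_zero_or_pos q with rfl | hq0
    · rw [zero_add] at hpos
      positivity
    · positivity
  nlinarith [Nat.zero_le (q ^ 2 * r)]

lemma four_le_of_two_le_predictedVar (hq : q ≤ 2 * n) (hs : 2 ≤ predictedVar n q) :
    4 ≤ q ∧ q + 4 ≤ 2 * n := by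
  obtain ⟨r, hr⟩ := Nat.exists_eq_add_of_le hq
  have hrR : (2 * n - q : ℝ) = r := by rw [sub_eq_iff_eq_add']; exact_mod_cast hr
  have hn : 0 < n := by
    refine Nat.pos_of_ne_zero fun hn => ?_
    norm_num [predictedVar, hn] at hs
  have hnR : (0 : ℝ) < 4 * n ^ 3 := by positivity
  rw [predictedVar, hrR, le_div_iff₀ hnR] at hs
  have hprod : 8 * n ^ 3 ≤ q ^ 2 * r ^ 2 := by
    have : (8 * n ^ 3 : ℝ) ≤ q ^ 2 * r ^ 2 := by linarith
    exact_mod_cast this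
  have hcube : 8 * n ^ 3 = (q + r) ^ 3 := by rw [← hr]; ring
  rw [hcube] at hprod
  have hq4 := four_le_of_add_pow_three_le (by omega) hprod
  have hr4 := four_le_of_add_pow_three_le (q := r) (r := q) (by omega) (by linarith)
  omega

theorem abs_varBridges_sub_predictedVar_le (hq : q ≤ 2 * n) (hs : 2 ≤ predictedVar n q) :
    |varBridges n q - predictedVar n q| ≤ 148 * √(predictedVar n q) := by
  obtain ⟨hq4, hqn⟩ := four_le_of_two_le_predictedVar hq hs
  have hn : 0 < n := by omega
  have hne : (bubbles n q).Nonempty := bubbles_nonempty hq4 (by omega)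
  have hmean : (𝔼 p ∈ bubbles n q, (bridgeCount p - predictedMean n q)) ^ 2 ≤ 7 ^ 2 :=
    sq_le_sq.2 ((abs_expect_bridgeCount_sub_le hn hne).trans (le_abs_self 7))
  have hsecond := abs_sub_le_mul_sqrt (expect_nonneg fun _ _ => sq_nonneg _)
    (one_le_two.trans hs) (abs_expect_sq_sub_predictedVar_le hn hq hne)
  have hroot : 1 ≤ √(predictedVar n q) := Real.one_le_sqrt.2 (one_le_two.trans hs)
  rw [varBridges_eq_expect, expect_sq_sub_expect hne _ (predictedMean n q)]
  rw [abs_le] at hsecond ⊢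
  -- `148 = 9 * (9 + 2) + 7 ^ 2`: second moment about `predictedMean`, then squared bias.
  constructor <;> nlinarith [sq_nonneg (𝔼 p ∈ bubbles n q, (bridgeCount p - predictedMean n q))]

theorem var_bridges_asymptotic_general {ι : Type*} {l : Filter ι} {n q : ι → ℕ}
    (hq : ∀ᶠ i in l, q i ≤ 2 * n i) (hs : Tendsto (fun i => predictedVar (n i) (q i)) l atTop) :
    Tendsto (fun i => varBridges (n i) (q i) / predictedVar (n i) (q i)) l (𝓝 1) := by
  refine tendsto_div_one_of_abs_sub_le_mul_sqrt (C := 148) hs ?_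
  filter_upwards [hq, hs.eventually_ge_atTop 2] with i hqi hsi
  exact abs_varBridges_sub_predictedVar_le hqi hsi

variable {c : ℝ} {q : ℕ → ℕ}

lemma eventually_le_two_mul (hc2 : c < 2) (hq : Tendsto (fun n => (q n : ℝ) / n) atTop (𝓝 c)) :
    ∀ᶠ n in atTop, q n ≤ 2 * n := by
  filter_upwards [hq.eventually_lt_const hc2, eventually_gt_atTop 0] with n hlt hn
  rw [div_lt_iff₀ (by positivity)] at hlt
  exact_mod_cast hlt.le

lemma tendsto_predictedVar_atTop (hc0 : 0 < c) (hc2 : c < 2)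
    (hq : Tendsto (fun n => (q n : ℝ) / n) atTop (𝓝 c)) :
    Tendsto (fun n => predictedVar n (q n)) atTop atTop := by
  have hratio : Tendsto (fun n : ℕ => ((q n : ℝ) / n) ^ 2 * (2 - (q n : ℝ) / n) ^ 2 / 4) atTop
      (𝓝 (c ^ 2 * (2 - c) ^ 2 / 4)) :=
    ((hq.pow 2).mul ((hq.const_sub 2).pow 2)).div_const 4
  have hpos : 0 < c ^ 2 * (2 - c) ^ 2 / 4 := by
    have : 0 < 2 - c := sub_pos.2 hc2
    positivity
  refine (hratio.pos_mul_atTop hpos tendsto_natCast_atTop_atTop).congr' ?_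
  filter_upwards [eventually_gt_atTop 0] with n hn
  unfold predictedVar
  field_simp

end Variance

/-- The variance of the number of bridges of bubbles of size `q n` in diagrams with `n` chords is
asymptotic to `q²(2n-q)²/(4n³)` whenever `q n / n → c` with `0 < c < 2`. -/
theorem var_bridges_asymptotic (c : ℝ) (hc0 : 0 < c) (hc2 : c < 2) (q : ℕ → ℕ)
    (hq : Filter.Tendsto (fun n => (q n : ℝ) / n) Filter.atTop (nhds c)) :
    Filter.Tendsto
      (fun n => varBridges n (q n) * (4 * (n : ℝ) ^ 3) /
        ((q n : ℝ) ^ 2 * (2 * (n : ℝ) - (q n : ℝ)) ^ 2))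
      Filter.atTop (nhds 1) := by
  simpa only [predictedVar, div_div_eq_mul_div] using
    var_bridges_asymptotic_general (eventually_le_two_mul hc2 hq)
      (tendsto_predictedVar_atTop hc0 hc2 hq)

end ChordBubbles
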